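/- Let E and F be finite dimensional Banach spaces. Then K_G(E,F) ≤ min{ρ(E,F), ρ(E,F*)}. -/

import Mathlib

/-!
The bound `K_G(E,F) ≤ ρ(E,F)` is the ideal property of the projective norm:
`‖u ∘ Aᵀ‖_∧ ≤ ‖u‖_∧ ‖A‖` (`projNorm_comp_le`).

The bound `K_G(E,F) ≤ ρ(E,F*)` is obtained by trace duality. By Hahn–Banach there is a linear
functional `Λ` on `E* ⊗ F`, dominated by the projective norm, which attains that norm at `u ∘ Aᵀ`;
it corresponds to a map `w : E* → F*` with `‖w‖ ≤ 1` (`exists_dual_map`). Writing `w` as a sum of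
elementary tensors `eᵢ ⊗ gᵢ` (with `eᵢ ∈ E`, by reflexivity), one has
`Λ(u ∘ Aᵀ) = ∑ gᵢ(u(Aᵀ eᵢ)) ≤ ‖u‖ ‖A‖ ∑ ‖eᵢ‖ ‖gᵢ‖`, and the infimum over all such representations
gives `‖u ∘ Aᵀ‖_∧ ≤ ‖w‖_∧ ≤ ρ(E,F*)` (`projNorm_comp_flip_le`).

Both suprema defining `ρ` are genuine because `‖u‖_∧ ≤ C ‖u‖` on a finite dimensional space
(`exists_projNorm_le`).
-/


open scoped BigOperators

/-- The projective tensor norm of the element of `X* ⊗ F` corresponding (via the canonical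
identification, `X` finite dimensional) to the continuous linear map `u : X → F`. -/
noncomputable def projNorm {X F : Type*} [NormedAddCommGroup X] [NormedSpace ℝ X]
    [NormedAddCommGroup F] [NormedSpace ℝ F] (u : X →L[ℝ] F) : ℝ :=
  sInf { r : ℝ | ∃ (k : ℕ) (η : Fin k → (X →L[ℝ] ℝ)) (f : Fin k → F),
    (∀ x, u x = ∑ i, η i x • f i) ∧ r = ∑ i, ‖η i‖ * ‖f i‖ }

/-- The Grothendieck constant `K_G(E,F)`.  An element of `E ⊗ F` is encoded as a map
`u : E* → F`, an element of `E* ⊗ F` as a map `E → F`, and `A ⊗ id_F` sends `u` to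
`u ∘ Aᵀ`, where `Aᵀ = A.flip : E → E*`. -/
noncomputable def KG (E F : Type*) [NormedAddCommGroup E] [NormedSpace ℝ E]
    [NormedAddCommGroup F] [NormedSpace ℝ F] : ℝ :=
  sSup { r : ℝ | ∃ (A : E →L[ℝ] (E →L[ℝ] ℝ)) (u : (E →L[ℝ] ℝ) →L[ℝ] F),
    ‖A‖ ≤ 1 ∧ ‖u‖ ≤ 1 ∧ r = projNorm (u.comp A.flip) }

/-- `ρ(E,F)`: the norm of the identity from `E ⊗̌ F` to `E ⊗̂ F`. -/
noncomputable def rho (E F : Type*) [NormedAddCommGroup E] [NormedSpace ℝ E]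
    [NormedAddCommGroup F] [NormedSpace ℝ F] : ℝ :=
  sSup { r : ℝ | ∃ u : (E →L[ℝ] ℝ) →L[ℝ] F, ‖u‖ ≤ 1 ∧ r = projNorm u }

/-- `A : E → E*` is non-negative: the corresponding tensor in `E* ⊗ E*` is a (finite) sum of
symmetric tensors `η ⊗ η`, i.e. lies in the convex hull of such tensors. -/
def IsNonnegMap {E : Type*} [NormedAddCommGroup E] [NormedSpace ℝ E]
    (A : E →L[ℝ] (E →L[ℝ] ℝ)) : Prop :=
  ∃ (k : ℕ) (η : Fin k → (E →L[ℝ] ℝ)), ∀ x, A x = ∑ i, η i x • η i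

/-- A tensor `z ∈ E ⊗ E` (encoded as a map `E* → E`) is non-negative if it is a finite sum of
symmetric tensors `e ⊗ e`. -/
def IsNonnegTensor {E : Type*} [NormedAddCommGroup E] [NormedSpace ℝ E]
    (z : (E →L[ℝ] ℝ) →L[ℝ] E) : Prop :=
  ∃ (k : ℕ) (e : Fin k → E), ∀ φ, z φ = ∑ i, φ (e i) • e i

/-- The positive Grothendieck constant `K_G⁺(E,F)`. -/
noncomputable def KGpos (E F : Type*) [NormedAddCommGroup E] [NormedSpace ℝ E]
    [NormedAddCommGroup F] [NormedSpace ℝ F] : ℝ :=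
  sSup { r : ℝ | ∃ (A : E →L[ℝ] (E →L[ℝ] ℝ)) (u : (E →L[ℝ] ℝ) →L[ℝ] F),
    IsNonnegMap A ∧ ‖A‖ ≤ 1 ∧ ‖u‖ ≤ 1 ∧ r = projNorm (u.comp A.flip) }

/-- The factorization constant `f(X,E)` of `X` through `E`. -/
noncomputable def factConst (X E : Type*) [NormedAddCommGroup X] [NormedSpace ℝ X]
    [NormedAddCommGroup E] [NormedSpace ℝ E] : ℝ :=
  sInf { r : ℝ | ∃ (u : X →L[ℝ] E) (v : E →L[ℝ] X),
    v.comp u = ContinuousLinearMap.id ℝ X ∧ r = ‖u‖ * ‖v‖ }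

/-- `γ(E) = sup { tr(BA) : A ≥ 0, B ≥ 0, ‖A‖ ≤ 1, ‖B‖ ≤ 1 }`. -/
noncomputable def gammaConst (E : Type*) [NormedAddCommGroup E] [NormedSpace ℝ E] : ℝ :=
  sSup { r : ℝ | ∃ (A : E →L[ℝ] (E →L[ℝ] ℝ)) (B : (E →L[ℝ] ℝ) →L[ℝ] E),
    IsNonnegMap A ∧ IsNonnegTensor B ∧ ‖A‖ ≤ 1 ∧ ‖B‖ ≤ 1 ∧
    r = LinearMap.trace ℝ E ((B.comp A : E →L[ℝ] E) : E →ₗ[ℝ] E) }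

/-- `ρ⁺(E)`: as `ρ(E,E)` but the supremum is restricted to non-negative tensors. -/
noncomputable def rhoPlus (E : Type*) [NormedAddCommGroup E] [NormedSpace ℝ E] : ℝ :=
  sSup { r : ℝ | ∃ z : (E →L[ℝ] ℝ) →L[ℝ] E,
    IsNonnegTensor z ∧ ‖z‖ ≤ 1 ∧ r = projNorm z }

/-- `X` has (Rademacher) cotype `q`. -/
def HasCotype (X : Type*) [NormedAddCommGroup X] [NormedSpace ℝ X] (q : ℝ) : Prop :=
  ∃ C > 0, ∀ (n : ℕ) (x : Fin n → X),
    (∑ i, ‖x i‖ ^ q) ^ (1/q) ≤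
      C * (((2 : ℝ) ^ n)⁻¹ *
        ∑ ε : Fin n → Bool, ‖∑ i, (if ε i then (1:ℝ) else -1) • x i‖ ^ 2) ^ (1/2 : ℝ)

section Aux

variable {X Y F : Type*} [NormedAddCommGroup X] [NormedSpace ℝ X]
  [NormedAddCommGroup Y] [NormedSpace ℝ Y] [NormedAddCommGroup F] [NormedSpace ℝ F]

lemma projNorm_nonneg (u : X →L[ℝ] F) : 0 ≤ projNorm u := by
  apply Real.sInf_nonneg
  rintro r ⟨k, η, f, -, rfl⟩
  positivity

lemma projNorm_le {ι : Type*} [Fintype ι] (u : X →L[ℝ] F) (η : ι → (X →L[ℝ] ℝ)) (f : ι → F)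
    (h : ∀ x, u x = ∑ i, η i x • f i) : projNorm u ≤ ∑ i, ‖η i‖ * ‖f i‖ := by
  let e := Fintype.equivFin ι
  refine csInf_le ⟨0, ?_⟩ ⟨Fintype.card ι, η ∘ e.symm, f ∘ e.symm, fun x => ?_, ?_⟩
  · rintro r ⟨k, η, f, -, rfl⟩
    positivity
  · rw [h]
    exact (Equiv.sum_comp e.symm fun i => η i x • f i).symm
  · exact (Equiv.sum_comp e.symm fun i => ‖η i‖ * ‖f i‖).symm

/-- The expansion of `u` along a basis of its domain, with continuous coordinate functionals. -/
lemma exists_basis_rep (X : Type*) [NormedAddCommGroup X] [NormedSpace ℝ X]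
    [FiniteDimensional ℝ X] :
    ∃ (k : ℕ) (η : Fin k → (X →L[ℝ] ℝ)) (b : Fin k → X),
      ∀ (u : X →L[ℝ] F) (x : X), u x = ∑ i, η i x • u (b i) := by
  let b := Module.finBasis ℝ X
  refine ⟨_, fun i => LinearMap.toContinuousLinearMap (b.coord i), b, fun u x => ?_⟩
  conv_lhs => rw [← b.sum_repr x, map_sum]
  simp [-Module.Basis.sum_repr]

variable (X F) in
/-- The projective norm is bounded by a multiple of the operator norm. -/
lemma exists_projNorm_le [FiniteDimensional ℝ X] :
    ∃ C : ℝ, ∀ u : X →L[ℝ] F, projNorm u ≤ C * ‖u‖ := by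
  obtain ⟨k, η, b, h⟩ := exists_basis_rep (F := F) X
  refine ⟨∑ i, ‖η i‖ * ‖b i‖, fun u => (projNorm_le u η _ (h u)).trans ?_⟩
  rw [Finset.sum_mul]
  refine Finset.sum_le_sum fun i _ => ?_
  rw [mul_assoc, mul_comm ‖b i‖]
  gcongr
  exact u.le_opNorm _

lemma exists_rep_lt [FiniteDimensional ℝ X] (u : X →L[ℝ] F) {r : ℝ} (hr : projNorm u < r) :
    ∃ (k : ℕ) (η : Fin k → (X →L[ℝ] ℝ)) (f : Fin k → F),
      (∀ x, u x = ∑ i, η i x • f i) ∧ ∑ i, ‖η i‖ * ‖f i‖ < r := by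
  obtain ⟨k, η, b, h⟩ := exists_basis_rep (F := F) X
  obtain ⟨_, ⟨k, η, f, h, rfl⟩, hlt⟩ :=
    exists_lt_of_csInf_lt (by exact ⟨_, k, η, _, h u, rfl⟩) hr
  exact ⟨k, η, f, h, hlt⟩

lemma projNorm_comp_le [FiniteDimensional ℝ X] (u : X →L[ℝ] F) (T : Y →L[ℝ] X) :
    projNorm (u.comp T) ≤ projNorm u * ‖T‖ := by
  have key : ∀ r, projNorm u < r → projNorm (u.comp T) ≤ r * ‖T‖ := by
    intro r hr
    obtain ⟨k, η, f, h, hlt⟩ := exists_rep_lt u hr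
    refine (projNorm_le (u.comp T) (fun i => (η i).comp T) f fun y => by simp [h]).trans ?_
    grw [← hlt]
    rw [Finset.sum_mul]
    refine Finset.sum_le_sum fun i _ => ?_
    rw [mul_right_comm]
    gcongr
    exact (η i).opNorm_comp_le T
  refine le_of_forall_pos_le_add fun ε hε => ?_
  have h1 := key (projNorm u + ε / (‖T‖ + 1)) (by linarith [show 0 < ε / (‖T‖ + 1) by positivity])
  have h2 : ε / (‖T‖ + 1) * ‖T‖ ≤ ε := by
    rw [div_mul_eq_mul_div, div_le_iff₀ (by positivity)]
    nlinarith
  linarith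

lemma projNorm_add_le [FiniteDimensional ℝ X] (u v : X →L[ℝ] F) :
    projNorm (u + v) ≤ projNorm u + projNorm v := by
  refine le_of_forall_pos_le_add fun ε hε => ?_
  obtain ⟨k, η, f, h, hlt⟩ := exists_rep_lt u (lt_add_of_pos_right _ (half_pos hε))
  obtain ⟨l, θ, g, h', hlt'⟩ := exists_rep_lt v (lt_add_of_pos_right _ (half_pos hε))
  have := projNorm_le (u + v) (Sum.elim η θ) (Sum.elim f g) fun x => by simp [h, h']
  simp only [Fintype.sum_sum_type, Sum.elim_inl, Sum.elim_inr] at this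
  linarith

lemma projNorm_zero : projNorm (0 : X →L[ℝ] F) = 0 :=
  le_antisymm (by simpa using projNorm_le (ι := Fin 0) (0 : X →L[ℝ] F) 0 0 (by simp))
    (projNorm_nonneg _)

lemma projNorm_smul_le [FiniteDimensional ℝ X] (c : ℝ) (u : X →L[ℝ] F) :
    projNorm (c • u) ≤ ‖c‖ * projNorm u := by
  have h : c • u = u.comp (c • ContinuousLinearMap.id ℝ X) := by ext; simp
  rw [h]
  refine (projNorm_comp_le _ _).trans ?_
  rw [mul_comm]
  have := projNorm_nonneg u
  gcongr
  rw [norm_smul]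
  exact mul_le_of_le_one_right (norm_nonneg _) ContinuousLinearMap.norm_id_le

variable (X F) in
/-- The projective norm on `X* ⊗ F`, bundled as a seminorm. -/
noncomputable def projSeminorm [FiniteDimensional ℝ X] : Seminorm ℝ (X →L[ℝ] F) :=
  Seminorm.ofSMulLE projNorm projNorm_zero projNorm_add_le projNorm_smul_le

lemma projSeminorm_apply [FiniteDimensional ℝ X] (u : X →L[ℝ] F) :
    projSeminorm X F u = projNorm u := rfl

lemma exists_norming_functional [FiniteDimensional ℝ X] (v : X →L[ℝ] F) :
    ∃ Λ : (X →L[ℝ] F) →ₗ[ℝ] ℝ, Λ v = projNorm v ∧ ∀ z, |Λ z| ≤ projNorm z := by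
  rcases eq_or_ne v 0 with rfl | hv
  · exact ⟨0, by simp [projNorm_zero], fun z => by simpa using projNorm_nonneg z⟩
  let f := LinearPMap.mkSpanSingleton (σ := RingHom.id ℝ) v (projNorm v) hv
  have hf : ∀ x : f.domain, f.toFun x ≤ projSeminorm X F x := by
    rintro ⟨x, hx⟩
    obtain ⟨c, rfl⟩ := Submodule.mem_span_singleton.1 hx
    have h1 : f.toFun ⟨c • v, hx⟩ = c * projNorm v :=
      LinearPMap.mkSpanSingleton'_apply _ _ _ c hx
    rw [h1, map_smul_eq_mul, projSeminorm_apply]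
    exact mul_le_mul_of_nonneg_right (le_abs_self c) (projNorm_nonneg v)
  obtain ⟨Λ, h1, h2⟩ := Module.Dual.exists_extension_of_le_seminorm_real f.domain f.toFun hf
  refine ⟨Λ, ?_, h2⟩
  exact (h1 ⟨v, Submodule.mem_span_singleton_self v⟩).trans
    (LinearPMap.mkSpanSingleton_apply ℝ ℝ hv (projNorm v))

/-- The dual of `X* ⊗̂ F` is the space of maps `X* → F*`: a functional norming `v` is represented
by a contraction `w`. -/
lemma exists_dual_map [FiniteDimensional ℝ X] (v : X →L[ℝ] F) :
    ∃ (Λ : (X →L[ℝ] F) →ₗ[ℝ] ℝ) (w : (X →L[ℝ] ℝ) →L[ℝ] (F →L[ℝ] ℝ)),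
      Λ v = projNorm v ∧ ‖w‖ ≤ 1 ∧ ∀ η f, Λ (η.smulRight f) = w η f := by
  obtain ⟨Λ, h1, h2⟩ := exists_norming_functional v
  let B : (X →L[ℝ] ℝ) →ₗ[ℝ] F →ₗ[ℝ] ℝ :=
    LinearMap.mk₂ ℝ (fun η f => Λ (η.smulRight f))
      (fun η θ f => by rw [← map_add]; congr 1; ext; simp [add_smul])
      (fun c η f => by rw [← map_smul]; congr 1; ext; simp [mul_smul])
      (fun η f g => by rw [← map_add]; congr 1; ext; simp)
      (fun c η f => by rw [← map_smul]; congr 1; ext x; simp [smul_smul, mul_comm])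
  have hB : ∀ η f, ‖B η f‖ ≤ 1 * ‖η‖ * ‖f‖ := fun η f => by
    refine (h2 _).trans ?_
    simpa using projNorm_le (ι := Unit) (η.smulRight f) (fun _ => η) (fun _ => f) (by simp)
  exact ⟨Λ, B.mkContinuous₂ 1 hB, h1, B.mkContinuous₂_norm_le zero_le_one hB, fun η f => rfl⟩

/-- Reflexivity of finite dimensional spaces. -/
lemma exists_eval_eq [FiniteDimensional ℝ X] (φ : (X →L[ℝ] ℝ) →L[ℝ] ℝ) :
    ∃ e : X, ‖e‖ = ‖φ‖ ∧ ∀ η, φ η = η e := by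
  let ψ : Module.Dual ℝ (Module.Dual ℝ X) :=
    φ.toLinearMap ∘ₗ (LinearMap.toContinuousLinearMap (𝕜 := ℝ) (E := X) (F' := ℝ)).toLinearMap
  obtain ⟨e, he⟩ := (Module.evalEquiv ℝ X).surjective ψ
  have h : ∀ η, φ η = η e := fun η => by
    have := LinearMap.congr_fun he η.toLinearMap
    exact this.symm
  refine ⟨e, ?_, h⟩
  rw [← (NormedSpace.inclusionInDoubleDualLi (E := X) ℝ).norm_map e]
  congr 1
  ext η
  exact (h η).symm

/-- Trace duality: `‖u ∘ Aᵀ‖_∧` is at most the projective norm of some contraction `E* → F*`. -/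
lemma projNorm_comp_flip_le [FiniteDimensional ℝ X] (A : X →L[ℝ] (X →L[ℝ] ℝ))
    (u : (X →L[ℝ] ℝ) →L[ℝ] F) (hA : ‖A‖ ≤ 1) (hu : ‖u‖ ≤ 1) :
    ∃ w : (X →L[ℝ] ℝ) →L[ℝ] (F →L[ℝ] ℝ), ‖w‖ ≤ 1 ∧ projNorm (u.comp A.flip) ≤ projNorm w := by
  obtain ⟨Λ, w, h1, hw, h2⟩ := exists_dual_map (u.comp A.flip)
  refine ⟨w, hw, le_of_forall_gt fun r hr => ?_⟩
  obtain ⟨k, φ, g, hφ, hlt⟩ := exists_rep_lt w hr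
  choose e he hev using fun i => exists_eval_eq (φ i)
  obtain ⟨l, ψ, b, hψ⟩ := exists_basis_rep (F := F) (X →L[ℝ] ℝ)
  have hsum : u.comp A.flip = ∑ j, ((ψ j).comp A.flip).smulRight (u (b j)) := by
    ext x
    simpa using hψ u (A.flip x)
  have hΛ : projNorm (u.comp A.flip) = ∑ i, g i (u (A.flip (e i))) := by
    rw [← h1, hsum, map_sum]
    simp_rw [h2, hφ, hev, hψ u (A.flip _), map_sum, sum_apply]
    rw [Finset.sum_comm]
    simp
  rw [hΛ]
  refine lt_of_le_of_lt (Finset.sum_le_sum fun i _ => ?_) hlt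
  have hAe : ‖A.flip (e i)‖ ≤ ‖e i‖ :=
    A.flip.le_of_opNorm_le (c := 1) (by rwa [A.opNorm_flip]) _ |>.trans (one_mul _).le
  have hue : ‖u (A.flip (e i))‖ ≤ ‖e i‖ :=
    (u.le_of_opNorm_le hu _).trans ((one_mul _).le.trans hAe)
  calc g i (u (A.flip (e i))) ≤ ‖g i‖ * ‖u (A.flip (e i))‖ :=
        (le_abs_self _).trans ((g i).le_opNorm _)
    _ ≤ ‖g i‖ * ‖e i‖ := by gcongr
    _ = ‖φ i‖ * ‖g i‖ := by rw [he, mul_comm]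

lemma projNorm_le_rho [FiniteDimensional ℝ X] (u : (X →L[ℝ] ℝ) →L[ℝ] F) (hu : ‖u‖ ≤ 1) :
    projNorm u ≤ rho X F := by
  obtain ⟨C, hC⟩ := exists_projNorm_le (X →L[ℝ] ℝ) F
  refine le_csSup ⟨|C|, ?_⟩ ⟨u, hu, rfl⟩
  rintro r ⟨v, hv, rfl⟩
  calc projNorm v ≤ C * ‖v‖ := hC v
    _ ≤ |C| * 1 := by gcongr; exact le_abs_self C
    _ = |C| := mul_one _

end Aux

/-- For finite dimensional `E` and `F`, `K_G(E,F) ≤ min {ρ(E,F), ρ(E,F*)}`. -/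
theorem statement3 (E F : Type*)
    [NormedAddCommGroup E] [NormedSpace ℝ E] [FiniteDimensional ℝ E]
    [NormedAddCommGroup F] [NormedSpace ℝ F] [FiniteDimensional ℝ F] :
    KG E F ≤ min (rho E F) (rho E (F →L[ℝ] ℝ)) := by
  refine csSup_le (by exact ⟨_, 0, 0, ContinuousLinearMap.opNorm_zero.trans_le zero_le_one,
    ContinuousLinearMap.opNorm_zero.trans_le zero_le_one, rfl⟩) ?_
  rintro r ⟨A, u, hA, hu, rfl⟩
  refine le_min ?_ ?_
  · calc projNorm (u.comp A.flip) ≤ projNorm u * ‖A.flip‖ := projNorm_comp_le u A.flip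
      _ ≤ projNorm u :=
        mul_le_of_le_one_right (projNorm_nonneg u) (by rwa [A.opNorm_flip])
      _ ≤ rho E F := projNorm_le_rho u hu
  · obtain ⟨w, hw, hle⟩ := projNorm_comp_flip_le A u hA hu
    exact hle.trans (projNorm_le_rho w hw)
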